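/- arXiv:1811.05215 — 3 statements merged into one kernel-verified Lean document; each statement's English description precedes it below -/
import Mathlib

section
/- Let a < b be real numbers, k ≥ 1 an integer, and v : [a,b] → ℝ continuously differentiable. Then there exists a unique polynomial w of degree at most k such that w(a) = v(a), w(b) = v(b), and ∫_a^b w'(x) q(x) dx = ∫_a^b v'(x) q(x) dx for every polynomial q of degree at most k−1. -/
/-!
The conditions `w(a) = v(a)` and `∫ w' q = ∫ v' q` for `deg q < k` form a square linear system
for polynomials `w` of degree at most `k`: there are `k + 1` unknowns and `1 + k` equations.
Its homogeneous version has only the zero solution, as the test polynomial `q = w'` gives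
`∫ (w')² = 0`, so `w` is constant, and it vanishes at `a`. Hence the system is uniquely solvable
(`h1System_injective`, `h1System_surjective`). The remaining condition `w(b) = v(b)`
follows from the test polynomial `q = 1` and the fundamental theorem of calculus.
-/

open MeasureTheory intervalIntegral Set Polynomial

lemma intervalIntegrable_eval_mul_eval (a b : ℝ) (p q : ℝ[X]) :
    IntervalIntegrable (fun x => p.eval x * q.eval x) volume a b :=
  (p.continuous.mul q.continuous).intervalIntegrable a b

lemma eq_zero_of_integral_mul_self {a b : ℝ} (hab : a < b) (p : ℝ[X])
    (h : (∫ x in a..b, p.eval x * p.eval x) = 0) : p = 0 := by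
  by_contra hp
  have hroot : ∀ x ∈ Set.Icc a b, p.eval x = 0 := by
    by_contra! hne
    obtain ⟨c, hc, hpc⟩ := hne
    have : 0 < ∫ x in a..b, p.eval x * p.eval x :=
      intervalIntegral.integral_pos hab (p.continuous.mul p.continuous).continuousOn
        (fun x _ => mul_self_nonneg _) ⟨c, hc, mul_self_pos.2 hpc⟩
    exact this.ne' h
  exact hp (Polynomial.eq_zero_of_infinite_isRoot p ((Set.Icc_infinite hab).mono hroot))

/-- The linear system behind the projection: a polynomial `w` of degree at most `k` is sent to its
value at `a` together with the functional `q ↦ ∫ w' q` on polynomials of degree less than `k`. -/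
noncomputable def h1System (a b : ℝ) (k : ℕ) :
    degreeLT ℝ (k + 1) →ₗ[ℝ] ℝ × Module.Dual ℝ (degreeLT ℝ k) where
  toFun w := (w.1.eval a,
    { toFun := fun q => ∫ x in a..b, (derivative w.1).eval x * q.1.eval x
      map_add' := fun p q => by
        rw [← intervalIntegral.integral_add (intervalIntegrable_eval_mul_eval ..)
          (intervalIntegrable_eval_mul_eval ..)]
        simp [mul_add]
      map_smul' := fun c q => by
        simp [mul_left_comm] })
  map_add' p q := by
    ext r
    · simp
    · simp [add_mul, intervalIntegral.integral_add (intervalIntegrable_eval_mul_eval ..)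
        (intervalIntegrable_eval_mul_eval ..)]
  map_smul' c p := by
    ext r
    · simp
    · simp [mul_assoc]

lemma derivative_mem_degreeLT {k : ℕ} {w : ℝ[X]} (hw : w ∈ degreeLT ℝ (k + 1)) :
    derivative w ∈ degreeLT ℝ k := by
  rw [mem_degreeLT, degree_lt_iff_coeff_zero] at *
  intro m hm
  rw [coeff_derivative, hw (m + 1) (by omega), zero_mul]

lemma h1System_injective {a b : ℝ} (hab : a < b) (k : ℕ) :
    Function.Injective (h1System a b k) := by
  rw [injective_iff_map_eq_zero]
  rintro ⟨w, hw⟩ h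
  have ha : w.eval a = 0 := congrArg Prod.fst h
  have hd : derivative w = 0 := eq_zero_of_integral_mul_self hab _
    (DFunLike.congr_fun (congrArg Prod.snd h) ⟨derivative w, derivative_mem_degreeLT hw⟩)
  have hC := eq_C_of_derivative_eq_zero hd
  rw [hC, eval_C] at ha
  rw [ha, C_0] at hC
  exact Subtype.ext hC

lemma h1System_surjective {a b : ℝ} (hab : a < b) (k : ℕ) :
    Function.Surjective (h1System a b k) := by
  have hfin : ∀ n, Module.finrank ℝ (degreeLT ℝ n) = n := fun n => by
    simp [(degreeLTEquiv ℝ n).finrank_eq]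
  have : ∀ n, Module.Finite ℝ (degreeLT ℝ n) := fun n =>
    Module.Finite.equiv (degreeLTEquiv ℝ n).symm
  refine (LinearMap.injective_iff_surjective_of_finrank_eq_finrank ?_).1 (h1System_injective hab k)
  rw [Module.finrank_prod, Subspace.dual_finrank_eq, hfin, hfin, Module.finrank_self, add_comm]

/-- The right-hand side functional `q ↦ ∫ v' q`. -/
noncomputable def h1Data {a b : ℝ} (k : ℕ) (v' : ℝ → ℝ)
    (hv' : ∀ q : ℝ[X], IntervalIntegrable (fun x => v' x * q.eval x) volume a b) :
    Module.Dual ℝ (degreeLT ℝ k) where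
  toFun q := ∫ x in a..b, v' x * q.1.eval x
  map_add' p q := by
    rw [← intervalIntegral.integral_add (hv' _) (hv' _)]
    simp [mul_add]
  map_smul' c q := by
    simp [mul_left_comm]

lemma mem_degreeLT_succ_iff {n : ℕ} {p : ℝ[X]} :
    p ∈ degreeLT ℝ (n + 1) ↔ p.natDegree ≤ n := by
  rw [mem_degreeLT, degree_lt_iff_coeff_zero, natDegree_le_iff_coeff_eq_zero]
  simp only [Nat.succ_le_iff]

/-- **Well-definedness of the local `H¹`-type projection.**
Let `a < b`, `k ≥ 1`, and let `v` be continuously differentiable on `[a,b]`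
(with derivative `v'`).  Then there is a unique polynomial `w` of degree at most `k`
with `w a = v a`, `w b = v b`, and `∫_a^b w' q = ∫_a^b v' q` for every polynomial `q`
of degree at most `k - 1`. -/
theorem local_H1_projection_exists_unique
    (a b : ℝ) (hab : a < b) (k : ℕ) (hk : 1 ≤ k)
    (v v' : ℝ → ℝ)
    (hv : ∀ x ∈ Set.Icc a b, HasDerivWithinAt v (v' x) (Set.Icc a b) x)
    (hv' : ContinuousOn v' (Set.Icc a b)) :
    ∃! w : Polynomial ℝ, w.natDegree ≤ k ∧ w.eval a = v a ∧ w.eval b = v b ∧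
      ∀ q : Polynomial ℝ, q.natDegree ≤ k - 1 →
        (∫ x in a..b, (Polynomial.derivative w).eval x * q.eval x) =
          ∫ x in a..b, v' x * q.eval x := by
  have hint : ∀ q : ℝ[X], IntervalIntegrable (fun x => v' x * q.eval x) volume a b := fun q =>
    (hv'.mul q.continuous.continuousOn).intervalIntegrable_of_Icc hab.le
  have hmem : ∀ q : ℝ[X], q ∈ degreeLT ℝ k ↔ q.natDegree ≤ k - 1 := fun q => by
    rw [← mem_degreeLT_succ_iff, Nat.sub_add_cancel hk]
  obtain ⟨⟨w, hw⟩, hwv⟩ := h1System_surjective hab k (v a, h1Data k v' hint)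
  have ha : w.eval a = v a := congrArg Prod.fst hwv
  have hq : ∀ q : ℝ[X], q.natDegree ≤ k - 1 →
      (∫ x in a..b, (derivative w).eval x * q.eval x) = ∫ x in a..b, v' x * q.eval x :=
    fun q hdeg => DFunLike.congr_fun (congrArg Prod.snd hwv) ⟨q, (hmem q).2 hdeg⟩
  refine ⟨w, ⟨mem_degreeLT_succ_iff.1 hw, ha, ?_, hq⟩, ?_⟩
  · have h1 := hq 1 (by simp)
    simp only [eval_one, mul_one] at h1
    have hFw : (∫ x in a..b, (derivative w).eval x) = w.eval b - w.eval a :=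
      intervalIntegral.integral_eq_sub_of_hasDerivAt (fun x _ => w.hasDerivAt x)
        ((derivative w).continuous.intervalIntegrable a b)
    have hFv : (∫ x in a..b, v' x) = v b - v a :=
      intervalIntegral.integral_eq_sub_of_hasDerivAt_of_le hab.le
        (fun x hx => (hv x hx).continuousWithinAt)
        (fun x hx => (hv x (Ioo_subset_Icc_self hx)).hasDerivAt (Icc_mem_nhds hx.1 hx.2))
        (hv'.intervalIntegrable_of_Icc hab.le)
    linarith
  · rintro u ⟨hu, hua, -, huq⟩
    have huv : h1System a b k ⟨u, mem_degreeLT_succ_iff.2 hu⟩ = (v a, h1Data k v' hint) :=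
      Prod.ext hua (LinearMap.ext fun q => huq q.1 ((hmem q.1).1 q.2))
    exact congrArg Subtype.val (h1System_injective hab k (huv.trans hwv.symm))
end

section
/- For every p ∈ Q_h and every m ∈ V_h one has the antisymmetry identity (∂_x m, π_h^{k−1} p) + (∂_x p, π_h^{k−1} m) = 0. -/
/-!
The elementwise derivatives `∂_x m` and `∂_x p` belong to `P_{k-1}(T_h)`
(`Mesh.PiecewisePoly.deriv`), so they are admissible test functions for the projections, which can
therefore be dropped: `(∂_x m, π_h p) = (∂_x m, p)` and `(∂_x p, π_h m) = (∂_x p, m)`. The sum is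
then the integral of `∂_x (p m)`. Since `p m` is continuous on `[x_L, x_R]` and differentiable off
the countable set of mesh points (`Mesh.exists_mem_Ioo`), the fundamental theorem of calculus gives
`(p m)(x_R) - (p m)(x_L)`, which vanishes by the boundary conditions on `p`.
-/

open MeasureTheory intervalIntegral Set

noncomputable section

/-- A mesh `x_L = x_0 < x_1 < ⋯ < x_N = x_R` of the interval `[x_L, x_R]`. -/
structure Mesh (xL xR : ℝ) where
  N : ℕ
  Npos : 0 < N
  pt : ℕ → ℝ
  left : pt 0 = xL
  right : pt N = xR
  mono : ∀ n < N, pt n < pt (n + 1)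

namespace Mesh

variable {xL xR : ℝ}

/-- The global mesh size `h = max_n (x_n - x_{n-1})`. -/
def hsize (M : Mesh xL xR) : ℝ :=
  (Finset.range M.N).sup' (Finset.nonempty_range_iff.mpr M.Npos.ne') fun n =>
    M.pt (n + 1) - M.pt n

/-- `v ∈ P_j(T_h)`: on the interior of each element, `v` coincides with a polynomial of
degree at most `j`. -/
def PiecewisePoly (M : Mesh xL xR) (j : ℕ) (v : ℝ → ℝ) : Prop :=
  ∀ n < M.N, ∃ P : Polynomial ℝ, P.natDegree ≤ j ∧
    ∀ x ∈ Set.Ioo (M.pt n) (M.pt (n + 1)), v x = P.eval x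

/-- `dv` is the elementwise derivative `∂_x v` of `v`. -/
def PiecewiseDeriv (M : Mesh xL xR) (v dv : ℝ → ℝ) : Prop :=
  ∀ n < M.N, ∀ x ∈ Set.Ioo (M.pt n) (M.pt (n + 1)), HasDerivAt v (dv x) x

/-- `v` is continuous on `[x_L,x_R]` and piecewise continuously differentiable with
elementwise derivative `dv` (continuous up to the closure of each element). -/
def PiecewiseC1 (M : Mesh xL xR) (v dv : ℝ → ℝ) : Prop :=
  ContinuousOn v (Set.Icc xL xR) ∧ M.PiecewiseDeriv v dv ∧
    ∀ n < M.N, ∃ w : ℝ → ℝ, ContinuousOn w (Set.Icc (M.pt n) (M.pt (n + 1))) ∧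
      Set.EqOn dv w (Set.Ioo (M.pt n) (M.pt (n + 1)))

end Mesh

/-- The `L²(x_L,x_R)` inner product `(v,w) = ∫ v w`. -/
def inner2 (xL xR : ℝ) (v w : ℝ → ℝ) : ℝ := ∫ x in xL..xR, v x * w x

/-- The `L²(x_L,x_R)` norm. -/
def L2norm (xL xR : ℝ) (v : ℝ → ℝ) : ℝ := Real.sqrt (∫ x in xL..xR, v x ^ 2)

/-- `pw = π_h^j w` is the `L²`-orthogonal projection of `w` onto `P_j(T_h)`. -/
def IsL2Proj {xL xR : ℝ} (M : Mesh xL xR) (j : ℕ) (w pw : ℝ → ℝ) : Prop :=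
  M.PiecewisePoly j pw ∧
    ∀ q : ℝ → ℝ, M.PiecewisePoly j q → inner2 xL xR pw q = inner2 xL xR w q

/-- `Iv = I_h^k v` is the interpolant of `v` (with elementwise derivative `dv`):
`Iv` is a continuous piecewise polynomial of degree at most `k` with elementwise
derivative `dIv`, it matches `v` at the mesh points, and `(∂_x Iv, q̃) = (∂_x v, q̃)`
for all `q̃ ∈ P_{k-1}(T_h)`. -/
def IsInterp {xL xR : ℝ} (M : Mesh xL xR) (k : ℕ) (v dv Iv dIv : ℝ → ℝ) : Prop :=
  M.PiecewisePoly k Iv ∧ ContinuousOn Iv (Set.Icc xL xR) ∧ M.PiecewiseDeriv Iv dIv ∧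
    (∀ n ≤ M.N, Iv (M.pt n) = v (M.pt n)) ∧
    ∀ q : ℝ → ℝ, M.PiecewisePoly (k - 1) q → inner2 xL xR dIv q = inner2 xL xR dv q

/-- Every point of `(x_L, x_R)` that is not a mesh point lies in the interior of an element. -/
lemma Mesh.exists_mem_Ioo {xL xR : ℝ} (M : Mesh xL xR) {x : ℝ} (hx : x ∈ Set.Ioo xL xR)
    (hne : x ∉ Set.range M.pt) : ∃ n < M.N, x ∈ Set.Ioo (M.pt n) (M.pt (n + 1)) := by
  have hex : ∃ n, x < M.pt n := ⟨M.N, by rw [M.right]; exact hx.2⟩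
  classical
  -- The right endpoint of the element is the first mesh point beyond `x`.
  have hpos : Nat.find hex ≠ 0 := by
    intro h0
    have h := Nat.find_spec hex
    rw [h0, M.left] at h
    exact absurd hx.1 h.not_gt
  obtain ⟨n, hn⟩ := Nat.exists_eq_succ_of_ne_zero hpos
  have hle : Nat.find hex ≤ M.N := Nat.find_min' hex (by rw [M.right]; exact hx.2)
  have hlt : ¬ x < M.pt n := Nat.find_min hex (by omega)
  have hspec := Nat.find_spec hex
  rw [hn] at hspec
  refine ⟨n, by omega, lt_of_le_of_ne (not_lt.mp hlt) fun h => hne ⟨n, h⟩, hspec⟩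

lemma Mesh.PiecewisePoly.intervalIntegrable {xL xR : ℝ} {M : Mesh xL xR} {j : ℕ} {v : ℝ → ℝ}
    (hv : M.PiecewisePoly j v) : IntervalIntegrable v volume xL xR := by
  suffices h : IntervalIntegrable v volume (M.pt 0) (M.pt M.N) by rwa [M.left, M.right] at h
  refine IntervalIntegrable.trans_iterate fun n hn => ?_
  obtain ⟨P, -, hP⟩ := hv n hn
  have hle := (M.mono n hn).le
  rw [intervalIntegrable_iff_integrableOn_Ioo_of_le hle]
  have hi : IntegrableOn (fun x => P.eval x) (Set.Ioo (M.pt n) (M.pt (n + 1))) volume :=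
    (intervalIntegrable_iff_integrableOn_Ioo_of_le hle).mp
      (P.continuous.intervalIntegrable _ _)
  exact hi.congr_fun (fun x hx => (hP x hx).symm) measurableSet_Ioo

lemma Mesh.PiecewisePoly.mul {xL xR : ℝ} {M : Mesh xL xR} {i j : ℕ} {v w : ℝ → ℝ}
    (hv : M.PiecewisePoly i v) (hw : M.PiecewisePoly j w) :
    M.PiecewisePoly (i + j) fun x => v x * w x := by
  intro n hn
  obtain ⟨P, hPd, hP⟩ := hv n hn
  obtain ⟨Q, hQd, hQ⟩ := hw n hn
  refine ⟨P * Q, Polynomial.natDegree_mul_le.trans (add_le_add hPd hQd), fun x hx => ?_⟩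
  simp only [Polynomial.eval_mul, hP x hx, hQ x hx]

lemma Mesh.PiecewisePoly.deriv {xL xR : ℝ} {M : Mesh xL xR} {j : ℕ} {v dv : ℝ → ℝ}
    (hv : M.PiecewisePoly j v) (hdv : M.PiecewiseDeriv v dv) :
    M.PiecewisePoly (j - 1) dv := by
  intro n hn
  obtain ⟨P, hPd, hP⟩ := hv n hn
  refine ⟨Polynomial.derivative P,
    (Polynomial.natDegree_derivative_le P).trans (Nat.sub_le_sub_right hPd 1), fun x hx => ?_⟩
  refine (hdv n hn x hx).unique ((P.hasDerivAt x).congr_of_eventuallyEq ?_)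
  filter_upwards [isOpen_Ioo.mem_nhds hx] with y hy using hP y hy

/-- **Antisymmetry identity.** For every `p ∈ Q_h` and `m ∈ V_h` one has
`(∂_x m, π_h^{k-1} p) + (∂_x p, π_h^{k-1} m) = 0`. -/
theorem antisymmetry
    (xL xR : ℝ) (hxLR : xL < xR) (k : ℕ) (hk : 1 ≤ k) (M : Mesh xL xR)
    (p dp : ℝ → ℝ)
    (hp_poly : M.PiecewisePoly k p) (hp_cont : ContinuousOn p (Set.Icc xL xR))
    (hp_bcL : p xL = 0) (hp_bcR : p xR = 0)
    (hdp : M.PiecewiseDeriv p dp)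
    (m dm : ℝ → ℝ)
    (hm_poly : M.PiecewisePoly k m) (hm_cont : ContinuousOn m (Set.Icc xL xR))
    (hdm : M.PiecewiseDeriv m dm)
    (pip pim : ℝ → ℝ)
    (hpip : IsL2Proj M (k - 1) p pip) (hpim : IsL2Proj M (k - 1) m pim) :
    inner2 xL xR dm pip + inner2 xL xR dp pim = 0 := by
  have hdm_poly := hm_poly.deriv hdm
  have hdp_poly := hp_poly.deriv hdp
  have h1 : inner2 xL xR dm pip = ∫ x in xL..xR, p x * dm x := by
    rw [← inner2, ← hpip.2 dm hdm_poly]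
    simp only [inner2, mul_comm]
  have h2 : inner2 xL xR dp pim = ∫ x in xL..xR, m x * dp x := by
    rw [← inner2, ← hpim.2 dp hdp_poly]
    simp only [inner2, mul_comm]
  have hi1 := (hp_poly.mul hdm_poly).intervalIntegrable
  have hi2 := (hm_poly.mul hdp_poly).intervalIntegrable
  rw [h1, h2, ← intervalIntegral.integral_add hi1 hi2]
  have hftc := MeasureTheory.integral_eq_of_hasDerivAt_off_countable_of_le
    (fun x => p x * m x) (fun x => p x * dm x + m x * dp x) hxLR.le
    (Set.countable_range M.pt) (hp_cont.mul hm_cont)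
    (fun x hx => by
      obtain ⟨n, hn, hxn⟩ := M.exists_mem_Ioo hx.1 hx.2
      exact ((hdp n hn x hxn).mul (hdm n hn x hxn)).congr_deriv (by ring))
    (hi1.add hi2)
  rw [hftc, hp_bcL, hp_bcR]
  ring
end
end

section
/- Let 0 ≤ s ≤ k be an integer and let w : [x_L,x_R] → ℝ be such that the restriction of w to each element T_n is s times continuously differentiable. Then ‖w − π_h^{k−1} w‖ ≤ h^s (Σ_{n=1}^N ‖w^{(s)}‖²_{L²(T_n)})^{1/2}, where w^{(s)} denotes the s-th derivative taken elementwise. -/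
/-!
The estimate is proved element by element.  On an element `[a, b]` the `L²`-projection is the best
`L²`-approximation by polynomials of degree at most `k - 1` (`integral_sq_sub_le_of_orthogonal`,
together with the elementwise orthogonality `IsL2Proj.local_orthogonal`, obtained by testing with
functions supported on a single element).  It therefore suffices to exhibit one polynomial `P` of
degree less than `s` with `∫ (w - P)² ≤ (b - a)^(2s) ∫ (w^(s))²`.  Such a `P` is built by induction
on `s` (`exists_poly_approx`): take an approximation `Q` of `w'`, and let `P` be the
antiderivative of `Q` agreeing with `w` at `a`.  Since `w - P` vanishes at `a`, the
Poincaré-type inequality `integral_sq_le_of_hasDerivAt` gains one factor `(b - a)²`.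
The constant is `1` at each step, hence `1` in the end.

Only the values of `w` and its derivatives on the open elements matter, so on each element they are
replaced by functions continuous on all of `ℝ`, which makes all integrability questions trivial.
-/

open MeasureTheory intervalIntegral Set

noncomputable section

theorem sq_integral_le {a b : ℝ} (hab : a ≤ b) {g : ℝ → ℝ} (hg : Continuous g) :
    (∫ x in a..b, g x) ^ 2 ≤ (b - a) * ∫ x in a..b, g x ^ 2 := by
  rcases hab.eq_or_lt with rfl | hlt
  · simp
  set I := ∫ x in a..b, g x with hI
  -- expand `0 ≤ ∫ ((b - a) g - I)²`
  have h0 : 0 ≤ ∫ x in a..b, ((b - a) * g x - I) ^ 2 :=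
    intervalIntegral.integral_nonneg hab fun x _ => sq_nonneg _
  have h1 : ∫ x in a..b, ((b - a) * g x - I) ^ 2 =
      (b - a) ^ 2 * (∫ x in a..b, g x ^ 2) - 2 * (b - a) * I * I + (b - a) * I ^ 2 := by
    have e : ∀ x, ((b - a) * g x - I) ^ 2 =
        (b - a) ^ 2 * g x ^ 2 - 2 * (b - a) * I * g x + I ^ 2 := fun x => by ring
    simp_rw [e]
    rw [intervalIntegral.integral_add, intervalIntegral.integral_sub,
      intervalIntegral.integral_const_mul, intervalIntegral.integral_const_mul,
      intervalIntegral.integral_const, smul_eq_mul]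
    all_goals exact Continuous.intervalIntegrable (by fun_prop) _ _
  have h2 : 0 ≤ (b - a) * ((b - a) * (∫ x in a..b, g x ^ 2) - I ^ 2) := by
    rw [h1] at h0; linarith
  have h3 := nonneg_of_mul_nonneg_right h2 (sub_pos.2 hlt)
  linarith

/-- Poincaré-type inequality for functions vanishing at the left endpoint. -/
theorem integral_sq_le_of_hasDerivAt {a b : ℝ} (hab : a ≤ b) {f g : ℝ → ℝ}
    (hf : Continuous f) (hg : Continuous g) (hfa : f a = 0)
    (hd : ∀ x ∈ Ioo a b, HasDerivAt f (g x) x) :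
    ∫ x in a..b, f x ^ 2 ≤ (b - a) ^ 2 * ∫ x in a..b, g x ^ 2 := by
  have hG0 : 0 ≤ ∫ x in a..b, g x ^ 2 :=
    intervalIntegral.integral_nonneg hab fun x _ => sq_nonneg _
  have hpt : ∀ x ∈ Icc a b, f x ^ 2 ≤ (b - a) * ∫ x in a..b, g x ^ 2 := by
    intro x hx
    have hint : ∫ y in a..x, g y = f x - f a :=
      integral_eq_sub_of_hasDerivAt_of_le hx.1 hf.continuousOn
        (fun y hy => hd y ⟨hy.1, hy.2.trans_le hx.2⟩) (hg.intervalIntegrable _ _)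
    have h1 := sq_integral_le hx.1 hg
    rw [hint, hfa, sub_zero] at h1
    have h2 : ∫ y in a..x, g y ^ 2 ≤ ∫ y in a..b, g y ^ 2 :=
      intervalIntegral.integral_mono_interval le_rfl hx.1 hx.2
        (Filter.Eventually.of_forall fun y => sq_nonneg _)
        ((hg.pow 2).intervalIntegrable _ _)
    refine h1.trans (mul_le_mul (by linarith [hx.2]) h2 ?_ (by linarith))
    exact intervalIntegral.integral_nonneg hx.1 fun x _ => sq_nonneg _
  have h := intervalIntegral.integral_mono_on hab ((hf.pow 2).intervalIntegrable (μ := volume) a b)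
    (continuous_const.intervalIntegrable a b) hpt
  rw [intervalIntegral.integral_const, smul_eq_mul] at h
  calc _ ≤ _ := h
    _ = _ := by ring

theorem exists_antiderivative (Q : Polynomial ℝ) (s : ℕ) (hQ : Q.degree < s) (a c : ℝ) :
    ∃ P : Polynomial ℝ, P.degree < (s + 1 : ℕ) ∧ P.derivative = Q ∧ P.eval a = c := by
  set R : Polynomial ℝ :=
    ∑ i ∈ Finset.range s, Polynomial.C (Q.coeff i / (i + 1)) * Polynomial.X ^ (i + 1) with hR
  have hRd : R.degree < (s + 1 : ℕ) := by
    refine (Polynomial.degree_sum_le _ _).trans_lt ?_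
    rw [Finset.sup_lt_iff (WithBot.bot_lt_coe _)]
    intro i hi
    refine (Polynomial.degree_C_mul_X_pow_le _ _).trans_lt ?_
    exact_mod_cast Nat.succ_lt_succ (Finset.mem_range.1 hi)
  refine ⟨R + Polynomial.C (c - R.eval a), ?_, ?_, by simp⟩
  · refine (Polynomial.degree_add_le _ _).trans_lt (max_lt hRd ?_)
    refine Polynomial.degree_C_le.trans_lt ?_
    exact_mod_cast Nat.succ_pos s
  · rw [Polynomial.derivative_add, Polynomial.derivative_C, add_zero, hR,
      Polynomial.derivative_sum]
    have hQs : Q = ∑ i ∈ Finset.range s, Polynomial.monomial i (Q.coeff i) := by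
      ext m
      simp only [Polynomial.finsetSum_coeff, Polynomial.coeff_monomial, Finset.sum_ite_eq',
        Finset.mem_range]
      split_ifs with hm
      · rfl
      · refine Polynomial.coeff_eq_zero_of_degree_lt (hQ.trans_le ?_)
        exact_mod_cast not_lt.1 hm
    conv_rhs => rw [hQs]
    refine Finset.sum_congr rfl fun i _ => ?_
    rw [Polynomial.derivative_C_mul_X_pow, ← Polynomial.C_mul_X_pow_eq_monomial]
    have : (i : ℝ) + 1 ≠ 0 := by positivity
    simp [div_mul_cancel₀ _ this]

/-- Polynomial approximation on one element; the case `s = 0` forces `P = 0`. -/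
theorem exists_poly_approx {a b : ℝ} (hab : a ≤ b) (s : ℕ) : ∀ (E : ℕ → ℝ → ℝ),
    (∀ i ≤ s, Continuous (E i)) →
    (∀ i < s, ∀ x ∈ Ioo a b, HasDerivAt (E i) (E (i + 1) x) x) →
    ∃ P : Polynomial ℝ, P.degree < s ∧
      ∫ x in a..b, (E 0 x - P.eval x) ^ 2 ≤ ((b - a) ^ s) ^ 2 * ∫ x in a..b, E s x ^ 2 := by
  induction s with
  | zero => exact fun E _ _ => ⟨0, by simp, by simp⟩
  | succ s ih =>
    intro E hE hd
    obtain ⟨Q, hQ, hQi⟩ := ih (fun i => E (i + 1)) (fun i hi => hE _ (by omega))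
      (fun i hi => hd (i + 1) (by omega))
    obtain ⟨P, hP, hPd, hPa⟩ := exists_antiderivative Q s hQ a (E 0 a)
    refine ⟨P, hP, ?_⟩
    have hE0 := hE 0 (by omega)
    have hE1 := hE 1 (by omega)
    have h1 := integral_sq_le_of_hasDerivAt hab (f := fun x => E 0 x - P.eval x)
      (g := fun x => E 1 x - Q.eval x) (by fun_prop) (by fun_prop) (by simp [hPa])
      (fun x hx => by
        have := P.hasDerivAt x
        rw [hPd] at this
        exact (hd 0 (by omega) x hx).sub this)
    calc _ ≤ _ := h1
      _ ≤ (b - a) ^ 2 * (((b - a) ^ s) ^ 2 * ∫ x in a..b, E (s + 1) x ^ 2) := by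
        gcongr
      _ = _ := by ring

theorem integral_sq_sub_le_of_orthogonal {a b : ℝ} (hab : a ≤ b) {u p q : ℝ → ℝ}
    (hu : Continuous u) (hp : Continuous p) (hq : Continuous q)
    (horth : ∫ x in a..b, (u x - p x) * (p x - q x) = 0) :
    ∫ x in a..b, (u x - p x) ^ 2 ≤ ∫ x in a..b, (u x - q x) ^ 2 := by
  have e : ∀ x, (u x - q x) ^ 2 =
      (u x - p x) ^ 2 + 2 * ((u x - p x) * (p x - q x)) + (p x - q x) ^ 2 := fun x => by ring
  have h0 : 0 ≤ ∫ x in a..b, (p x - q x) ^ 2 :=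
    intervalIntegral.integral_nonneg hab fun x _ => sq_nonneg _
  simp_rw [e]
  rw [intervalIntegral.integral_add, intervalIntegral.integral_add,
    intervalIntegral.integral_const_mul, horth]
  · linarith
  all_goals exact Continuous.intervalIntegrable (by fun_prop) _ _

theorem Mesh.pt_le {xL xR : ℝ} (M : Mesh xL xR) {m n : ℕ} (hmn : m ≤ n) (hn : n ≤ M.N) :
    M.pt m ≤ M.pt n := by
  induction n, hmn using Nat.le_induction with
  | base => exact le_rfl
  | succ n hmn ih => exact (ih (by omega)).trans (M.mono n (by omega)).le

theorem integral_mul_indicator_Ioo {A B a b : ℝ} (hA : A ≤ a) (hab : a ≤ b) (hB : b ≤ B)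
    (f g : ℝ → ℝ) :
    ∫ x in A..B, f x * (Ioo a b).indicator g x = ∫ x in a..b, f x * g x := by
  have e : ∀ x, f x * (Ioo a b).indicator g x = (Ioo a b).indicator (fun x => f x * g x) x := by
    intro x
    by_cases hx : x ∈ Ioo a b <;> simp [hx]
  simp_rw [e]
  rw [intervalIntegral.integral_of_le (hA.trans (hab.trans hB)),
    intervalIntegral.integral_of_le hab, setIntegral_indicator measurableSet_Ioo,
    inter_eq_self_of_subset_right, integral_Ioc_eq_integral_Ioo]
  exact fun x hx => ⟨hA.trans_lt hx.1, hx.2.le.trans hB⟩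

/-- The projection identity localises to each element: a polynomial cut off outside one
element is still an admissible test function. -/
theorem IsL2Proj.local_orthogonal {xL xR : ℝ} {M : Mesh xL xR} {j : ℕ} {w pw : ℝ → ℝ}
    (h : IsL2Proj M j w pw) {n : ℕ} (hn : n < M.N) (R : Polynomial ℝ) (hR : R.natDegree ≤ j) :
    ∫ x in (M.pt n)..(M.pt (n + 1)), pw x * R.eval x =
      ∫ x in (M.pt n)..(M.pt (n + 1)), w x * R.eval x := by
  have hA : xL ≤ M.pt n := M.left.symm.trans_le (M.pt_le (Nat.zero_le n) hn.le)
  have hB : M.pt (n + 1) ≤ xR := by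
    have := M.pt_le (Nat.succ_le_of_lt hn) le_rfl
    rwa [M.right] at this
  have hab := (M.mono n hn).le
  have key := h.2 ((Ioo (M.pt n) (M.pt (n + 1))).indicator fun x => R.eval x) (by
    intro m hm
    rcases lt_trichotomy m n with hlt | rfl | hgt
    · refine ⟨0, by simp, fun x hx => ?_⟩
      have := M.pt_le (Nat.succ_le_of_lt hlt) hn.le
      simp only [Polynomial.eval_zero]
      exact indicator_of_notMem (fun hx' => by linarith [hx.2, hx'.1]) _
    · exact ⟨R, hR, fun x hx => indicator_of_mem hx _⟩
    · refine ⟨0, by simp, fun x hx => ?_⟩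
      have := M.pt_le (Nat.succ_le_of_lt hgt) hm.le
      simp only [Polynomial.eval_zero]
      exact indicator_of_notMem (fun hx' => by linarith [hx.1, hx'.2]) _)
  unfold inner2 at key
  rwa [integral_mul_indicator_Ioo hA hab hB, integral_mul_indicator_Ioo hA hab hB] at key

theorem exists_continuous_eqOn {a b : ℝ} (hab : a ≤ b) {f wc : ℝ → ℝ}
    (hwc : ContinuousOn wc (Icc a b)) (h : EqOn f wc (Ioo a b)) :
    ∃ E : ℝ → ℝ, Continuous E ∧ EqOn f E (Ioo a b) :=
  ⟨IccExtend hab ((Icc a b).domRestrict wc), hwc.domRestrict.Icc_extend', fun x hx => by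
    rw [h hx, IccExtend_of_mem hab _ (Ioo_subset_Icc_self hx)]; rfl⟩

/-- **Approximation estimate for the `L²`-projection.** Let `0 ≤ s ≤ k` and let `w` be
`s` times continuously differentiable on each element (`D i` denotes the elementwise
`i`-th derivative of `w`, so `D 0 = w`).  Then
`‖w - π_h^{k-1} w‖ ≤ h^s (Σ_n ‖w^{(s)}‖²_{L²(T_n)})^{1/2}`. -/
theorem projection_approximation
    (xL xR : ℝ) (hxLR : xL < xR) (k : ℕ) (hk : 1 ≤ k) (M : Mesh xL xR)
    (s : ℕ) (hs : s ≤ k)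
    (w : ℝ → ℝ) (D : ℕ → ℝ → ℝ) (hD0 : D 0 = w)
    (hDderiv : ∀ i < s, M.PiecewiseDeriv (D i) (D (i + 1)))
    (hDcont : ∀ i ≤ s, ∀ n < M.N, ∃ wc : ℝ → ℝ,
      ContinuousOn wc (Set.Icc (M.pt n) (M.pt (n + 1))) ∧
        Set.EqOn (D i) wc (Set.Ioo (M.pt n) (M.pt (n + 1))))
    (pw : ℝ → ℝ) (hpw : IsL2Proj M (k - 1) w pw) :
    L2norm xL xR (fun x => w x - pw x) ≤
      M.hsize ^ s *
        Real.sqrt (∑ n ∈ Finset.range M.N, ∫ x in (M.pt n)..(M.pt (n + 1)), (D s x) ^ 2) := by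
  have helem : ∀ n < M.N,
      IntervalIntegrable (fun x => (w x - pw x) ^ 2) volume (M.pt n) (M.pt (n + 1)) ∧
      ∫ x in (M.pt n)..(M.pt (n + 1)), (w x - pw x) ^ 2 ≤
        (M.hsize ^ s) ^ 2 * ∫ x in (M.pt n)..(M.pt (n + 1)), (D s x) ^ 2 := by
    intro n hn
    set a := M.pt n with ha
    set b := M.pt (n + 1) with hb
    have hlt : a < b := M.mono n hn
    have hab := hlt.le
    have hex : ∀ i, ∃ E : ℝ → ℝ, i ≤ s → Continuous E ∧ EqOn (D i) E (Ioo a b) := by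
      intro i
      by_cases hi : i ≤ s
      · obtain ⟨wc, h1, h2⟩ := hDcont i hi n hn
        obtain ⟨E, h3, h4⟩ := exists_continuous_eqOn hab h1 h2
        exact ⟨E, fun _ => ⟨h3, h4⟩⟩
      · exact ⟨0, fun h => absurd h hi⟩
    choose E hE using hex
    have hEc : ∀ i ≤ s, Continuous (E i) := fun i hi => (hE i hi).1
    have hEq : ∀ i ≤ s, EqOn (D i) (E i) (Ioo a b) := fun i hi => (hE i hi).2
    have hE0 := hEc 0 (Nat.zero_le s)
    have hw : EqOn w (E 0) (Ioo a b) := hD0 ▸ hEq 0 (Nat.zero_le s)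
    obtain ⟨P, hPd, hP⟩ := exists_poly_approx hab s E hEc (fun i hi x hx => by
      rw [← hEq (i + 1) hi hx]
      exact (hDderiv i hi n hn x hx).congr_of_eventuallyEq
        ((hEq i hi.le).symm.eventuallyEq_of_mem (Ioo_mem_nhds hx.1 hx.2)))
    obtain ⟨p, hpd, hp⟩ := hpw.1 n hn
    have hPk : P.natDegree ≤ k - 1 := by
      by_cases h0 : P = 0
      · simp [h0]
      · have := (Polynomial.natDegree_lt_iff_degree_lt h0).2 hPd
        omega
    have horth := hpw.local_orthogonal hn (p - P)
      ((Polynomial.natDegree_sub_le _ _).trans (max_le hpd hPk))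
    have horth' : ∫ x in a..b, (E 0 x - p.eval x) * (p.eval x - P.eval x) = 0 := by
      have e1 : ∫ x in a..b, pw x * (p - P).eval x =
          ∫ x in a..b, p.eval x * (p - P).eval x :=
        integral_congr_Ioo_of_le hab fun x hx => by
          rw [hp x hx]
      have e2 : ∫ x in a..b, w x * (p - P).eval x =
          ∫ x in a..b, E 0 x * (p - P).eval x :=
        integral_congr_Ioo_of_le hab fun x hx => by
          rw [hw hx]
      rw [e1, e2] at horth
      simp_rw [sub_mul, ← Polynomial.eval_sub]
      rw [intervalIntegral.integral_sub, horth, sub_self]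
      all_goals exact Continuous.intervalIntegrable (by fun_prop) _ _
    have hbest := integral_sq_sub_le_of_orthogonal hab hE0 p.continuous P.continuous horth'
    have hEqOn : EqOn (fun x => (E 0 x - p.eval x) ^ 2) (fun x => (w x - pw x) ^ 2)
        (Ioo a b) := fun x hx => by
      change _ = (w x - pw x) ^ 2
      rw [hp x hx, hw hx]
    have hDs : ∫ x in a..b, (D s x) ^ 2 = ∫ x in a..b, (E s x) ^ 2 :=
      integral_congr_Ioo_of_le hab fun x hx => by
        rw [hEq s le_rfl hx]
    refine ⟨IntervalIntegrable.congr_uIoo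
      (Continuous.intervalIntegrable (by fun_prop) _ _) (uIoo_of_le hab ▸ hEqOn), ?_⟩
    rw [← integral_congr_Ioo_of_le hab hEqOn, hDs]
    refine (hbest.trans hP).trans ?_
    have hh : b - a ≤ M.hsize :=
      Finset.le_sup' (fun n => M.pt (n + 1) - M.pt n) (Finset.mem_range.2 hn)
    have hba : 0 ≤ b - a := by linarith
    have hI : 0 ≤ ∫ x in a..b, E s x ^ 2 :=
      intervalIntegral.integral_nonneg hab fun x _ => sq_nonneg _
    gcongr
  have hsum : ∫ x in xL..xR, (w x - pw x) ^ 2 ≤ (M.hsize ^ s) ^ 2 *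
      ∑ n ∈ Finset.range M.N, ∫ x in (M.pt n)..(M.pt (n + 1)), (D s x) ^ 2 := by
    have h := sum_integral_adjacent_intervals (fun n hn => (helem n hn).1)
    rw [M.left, M.right] at h
    rw [← h, Finset.mul_sum]
    exact Finset.sum_le_sum fun n hn => (helem n (Finset.mem_range.1 hn)).2
  have hh0 : 0 ≤ M.hsize :=
    (sub_pos.2 (M.mono 0 M.Npos)).le.trans
      (Finset.le_sup' (fun n => M.pt (n + 1) - M.pt n) (Finset.mem_range.2 M.Npos))
  unfold L2norm
  refine (Real.sqrt_le_sqrt hsum).trans_eq ?_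
  rw [Real.sqrt_mul (sq_nonneg _), Real.sqrt_sq (pow_nonneg hh0 s)]
end
end
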